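/- Let Ω be an open subset of ℝⁿ and let ℱ be a finite or countable family of H-continuous pairs on Ω. Then the set D_ℱ = { x ∈ Ω : u(x) = v(x) for every (u, v) ∈ ℱ } is dense in Ω, and for every (u, v) ∈ ℱ the function u is continuous on D_ℱ. -/

import Mathlib

open Set

/-- Points of `ℝⁿ`. -/
abbrev Pt (n : ℕ) := EuclideanSpace ℝ (Fin n)

/-- Lower Baire operator `I(D,Ω,f)(x) = sup_{δ>0} inf { f y : y ∈ B_δ(x) ∩ D }`,
where `B_δ(x) = { y ∈ Ω : ‖y - x‖ < δ }`. -/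
noncomputable def Ilow {n : ℕ} (D Om : Set (Pt n)) (f : Pt n → ℝ) (x : Pt n) : ℝ :=
  sSup {a : ℝ | ∃ δ : ℝ, 0 < δ ∧
    a = sInf (f '' {y | y ∈ Om ∧ ‖y - x‖ < δ ∧ y ∈ D})}

/-- Upper Baire operator `S(D,Ω,f)(x) = inf_{δ>0} sup { f y : y ∈ B_δ(x) ∩ D }`. -/
noncomputable def Shigh {n : ℕ} (D Om : Set (Pt n)) (f : Pt n → ℝ) (x : Pt n) : ℝ :=
  sInf {a : ℝ | ∃ δ : ℝ, 0 < δ ∧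
    a = sSup (f '' {y | y ∈ Om ∧ ‖y - x‖ < δ ∧ y ∈ D})}

/-- `f`, defined on `D ⊆ Ω`, is locally bounded relative to `Ω`. -/
def LocBddOn {n : ℕ} (Om D : Set (Pt n)) (f : Pt n → ℝ) : Prop :=
  ∀ x ∈ Om, ∃ δ : ℝ, 0 < δ ∧ ∃ M : ℝ,
    ∀ y, y ∈ Om → ‖y - x‖ < δ → y ∈ D → |f y| < M

/-- `(u, v)` encodes an interval-valued function `x ↦ [u x, v x]` on `Om`. -/
def IntervalPair {n : ℕ} (Om : Set (Pt n)) (u v : Pt n → ℝ) : Prop :=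
  LocBddOn Om Om u ∧ LocBddOn Om Om v ∧ ∀ x ∈ Om, u x ≤ v x

/-- The pair `(u, v)` is S-continuous on `Om`: `I(u) = u` and `S(v) = v`. -/
def SCont {n : ℕ} (Om : Set (Pt n)) (u v : Pt n → ℝ) : Prop :=
  ∀ x ∈ Om, Ilow Om Om u x = u x ∧ Shigh Om Om v x = v x

/-- The pair `(u, v)` is Hausdorff continuous on `Om`. -/
def HCont {n : ℕ} (Om : Set (Pt n)) (u v : Pt n → ℝ) : Prop :=
  ∀ p q : Pt n → ℝ, LocBddOn Om Om p → LocBddOn Om Om q →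
    (∀ x ∈ Om, u x ≤ p x ∧ p x ≤ q x ∧ q x ≤ v x) →
    ∀ x ∈ Om, Ilow Om Om p x = u x ∧ Shigh Om Om q x = v x

/-- `(u, v)` is an H-continuous interval pair on `Om`. -/
def HContPair {n : ℕ} (Om : Set (Pt n)) (u v : Pt n → ℝ) : Prop :=
  IntervalPair Om u v ∧ HCont Om u v

/-- Lower endpoint of the pointwise interval product. -/
noncomputable def imin {n : ℕ} (u₁ v₁ u₂ v₂ : Pt n → ℝ) (x : Pt n) : ℝ :=
  min (min (u₁ x * u₂ x) (u₁ x * v₂ x)) (min (v₁ x * u₂ x) (v₁ x * v₂ x))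

/-- Upper endpoint of the pointwise interval product. -/
noncomputable def imax {n : ℕ} (u₁ v₁ u₂ v₂ : Pt n → ℝ) (x : Pt n) : ℝ :=
  max (max (u₁ x * u₂ x) (u₁ x * v₂ x)) (max (v₁ x * u₂ x) (v₁ x * v₂ x))

/-- `(pl, pu)` is the H-continuous pair contained pointwise in the interval sum of
`(u₁, v₁)` and `(u₂, v₂)`, i.e. `(pl, pu) = (u₁,v₁) ⊕ (u₂,v₂)`. -/
def IsOplus {n : ℕ} (Om : Set (Pt n)) (u₁ v₁ u₂ v₂ pl pu : Pt n → ℝ) : Prop :=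
  HContPair Om pl pu ∧
    ∀ x ∈ Om, u₁ x + u₂ x ≤ pl x ∧ pl x ≤ pu x ∧ pu x ≤ v₁ x + v₂ x

/-- `(ql, qu)` is the H-continuous pair contained pointwise in the interval product of
`(u₁, v₁)` and `(u₂, v₂)`, i.e. `(ql, qu) = (u₁,v₁) ⊗ (u₂,v₂)`. -/
def IsOtimes {n : ℕ} (Om : Set (Pt n)) (u₁ v₁ u₂ v₂ ql qu : Pt n → ℝ) : Prop :=
  HContPair Om ql qu ∧
    ∀ x ∈ Om, imin u₁ v₁ u₂ v₂ x ≤ ql x ∧ ql x ≤ qu x ∧ qu x ≤ imax u₁ v₁ u₂ v₂ x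

lemma ilow_bddBelow {n : ℕ} {Om : Set (Pt n)} {u : Pt n → ℝ}
    (h : ∀ x ∈ Om, Ilow Om Om u x = u x) (x : Pt n) (δ : ℝ) :
    BddBelow (u '' {y | y ∈ Om ∧ ‖y - x‖ < δ ∧ y ∈ Om}) := by
  by_contra hb
  obtain ⟨_, ⟨y, ⟨hy, hyx, -⟩, rfl⟩, hneg⟩ := not_bddBelow_iff.1 hb 0
  have hδ : 0 < δ := lt_of_le_of_lt (norm_nonneg _) hyx
  have hb2 : ¬ BddBelow (u '' {z | z ∈ Om ∧ ‖z - y‖ < 2 * δ ∧ z ∈ Om}) := by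
    intro hc
    apply hb
    refine hc.mono (image_mono ?_)
    rintro z ⟨hz, hzx, -⟩
    refine ⟨hz, ?_, hz⟩
    have := norm_sub_le (z - x) (y - x)
    rw [sub_sub_sub_cancel_right] at this
    linarith
  have h0 : (0:ℝ) ≤ Ilow Om Om u y := by
    unfold Ilow
    apply le_csSup
    · refine ⟨max (u y) 0, ?_⟩
      rintro a ⟨ε, hε, rfl⟩
      by_cases hc : BddBelow (u '' {z | z ∈ Om ∧ ‖z - y‖ < ε ∧ z ∈ Om})
      · exact le_max_of_le_left (csInf_le hc ⟨y, ⟨hy, by simpa using hε, hy⟩, rfl⟩)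
      · rw [Real.sInf_of_not_bddBelow hc]; exact le_max_right _ _
    · exact ⟨2 * δ, by linarith, (Real.sInf_of_not_bddBelow hb2).symm⟩
  rw [h y hy] at h0
  linarith

lemma shigh_bddAbove {n : ℕ} {Om : Set (Pt n)} {u : Pt n → ℝ}
    (h : ∀ x ∈ Om, Shigh Om Om u x = u x) (x : Pt n) (δ : ℝ) :
    BddAbove (u '' {y | y ∈ Om ∧ ‖y - x‖ < δ ∧ y ∈ Om}) := by
  by_contra hb
  obtain ⟨_, ⟨y, ⟨hy, hyx, -⟩, rfl⟩, hneg⟩ := not_bddAbove_iff.1 hb 0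
  have hδ : 0 < δ := lt_of_le_of_lt (norm_nonneg _) hyx
  have hb2 : ¬ BddAbove (u '' {z | z ∈ Om ∧ ‖z - y‖ < 2 * δ ∧ z ∈ Om}) := by
    intro hc
    apply hb
    refine hc.mono (image_mono ?_)
    rintro z ⟨hz, hzx, -⟩
    refine ⟨hz, ?_, hz⟩
    have := norm_sub_le (z - x) (y - x)
    rw [sub_sub_sub_cancel_right] at this
    linarith
  have h0 : Shigh Om Om u y ≤ (0:ℝ) := by
    unfold Shigh
    apply csInf_le
    · refine ⟨min (u y) 0, ?_⟩
      rintro a ⟨ε, hε, rfl⟩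
      by_cases hc : BddAbove (u '' {z | z ∈ Om ∧ ‖z - y‖ < ε ∧ z ∈ Om})
      · exact min_le_of_left_le (le_csSup hc ⟨y, ⟨hy, by simpa using hε, hy⟩, rfl⟩)
      · rw [Real.sSup_of_not_bddAbove hc]; exact min_le_right _ _
    · exact ⟨2 * δ, by linarith, (Real.sSup_of_not_bddAbove hb2).symm⟩
  rw [h y hy] at h0
  linarith

lemma ilow_lsc {n : ℕ} {Om : Set (Pt n)} {u : Pt n → ℝ}
    (h : ∀ x ∈ Om, Ilow Om Om u x = u x) {x : Pt n} (hx : x ∈ Om) {a : ℝ} (ha : a < u x) :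
    ∃ δ > 0, ∀ y ∈ Om, ‖y - x‖ < δ → a < u y := by
  rw [← h x hx] at ha
  unfold Ilow at ha
  obtain ⟨_, ⟨δ, hδ, rfl⟩, hlt⟩ := exists_lt_of_lt_csSup (by exact ⟨_, 1, one_pos, rfl⟩) ha
  exact ⟨δ, hδ, fun y hy hyx =>
    lt_of_lt_of_le hlt (csInf_le (ilow_bddBelow h x δ) ⟨y, ⟨hy, hyx, hy⟩, rfl⟩)⟩

lemma shigh_usc {n : ℕ} {Om : Set (Pt n)} {u : Pt n → ℝ}
    (h : ∀ x ∈ Om, Shigh Om Om u x = u x) {x : Pt n} (hx : x ∈ Om) {a : ℝ} (ha : u x < a) :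
    ∃ δ > 0, ∀ y ∈ Om, ‖y - x‖ < δ → u y < a := by
  rw [← h x hx] at ha
  unfold Shigh at ha
  obtain ⟨_, ⟨δ, hδ, rfl⟩, hlt⟩ := exists_lt_of_csInf_lt (by exact ⟨_, 1, one_pos, rfl⟩) ha
  exact ⟨δ, hδ, fun y hy hyx =>
    lt_of_le_of_lt (le_csSup (shigh_bddAbove h x δ) ⟨y, ⟨hy, hyx, hy⟩, rfl⟩) hlt⟩

lemma shigh_approx {n : ℕ} {Om : Set (Pt n)} {u v : Pt n → ℝ} (huv : ∀ x ∈ Om, u x ≤ v x)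
    (h : ∀ x ∈ Om, Shigh Om Om v x = v x) (h2 : ∀ x ∈ Om, Shigh Om Om u x = v x)
    {x : Pt n} (hx : x ∈ Om) {a δ : ℝ} (ha : a < v x) (hδ : 0 < δ) :
    ∃ y ∈ Om, ‖y - x‖ < δ ∧ a < u y := by
  have hbd : ∀ ε, BddAbove (u '' {y | y ∈ Om ∧ ‖y - x‖ < ε ∧ y ∈ Om}) := by
    intro ε
    obtain ⟨M, hM⟩ := shigh_bddAbove h x ε
    refine ⟨M, ?_⟩
    rintro _ ⟨y, hy, rfl⟩
    exact (huv y hy.1).trans (hM ⟨y, hy, rfl⟩)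
  rw [← h2 x hx] at ha
  have h3 : a < sSup (u '' {y | y ∈ Om ∧ ‖y - x‖ < δ ∧ y ∈ Om}) := by
    refine lt_of_lt_of_le ha (csInf_le ⟨u x, ?_⟩ ⟨δ, hδ, rfl⟩)
    rintro _ ⟨ε, hε, rfl⟩
    exact le_csSup (hbd ε) ⟨x, ⟨hx, by simpa using hε, hx⟩, rfl⟩
  obtain ⟨_, ⟨y, ⟨hy, hyx, -⟩, rfl⟩, hlt⟩ :=
    exists_lt_of_lt_csSup (by exact ⟨u x, x, ⟨hx, by simpa using hδ, hx⟩, rfl⟩) h3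
  exact ⟨y, hy, hyx, hlt⟩

lemma hcont_facts {n : ℕ} {Om : Set (Pt n)} {u v : Pt n → ℝ} (h : HContPair Om u v) :
    (∀ x ∈ Om, u x ≤ v x) ∧ (∀ x ∈ Om, Ilow Om Om u x = u x) ∧
    (∀ x ∈ Om, Shigh Om Om v x = v x) ∧ (∀ x ∈ Om, Shigh Om Om u x = v x) := by
  obtain ⟨⟨hu, hv, huv⟩, hH⟩ := h
  have h1 := hH u v hu hv (fun x hx => ⟨le_rfl, huv x hx, le_rfl⟩)
  have h2 := hH u u hu hu (fun x hx => ⟨le_rfl, le_rfl, huv x hx⟩)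
  exact ⟨huv, fun x hx => (h1 x hx).1, fun x hx => (h1 x hx).2, fun x hx => (h2 x hx).2⟩

lemma hcont_W_open {n : ℕ} {Om : Set (Pt n)} (hOm : IsOpen Om) {u v : Pt n → ℝ}
    (h : HContPair Om u v) (ε : ℝ) : IsOpen {x | x ∈ Om ∧ v x - u x < ε} := by
  obtain ⟨huv, hI, hS, hSu⟩ := hcont_facts h
  rw [Metric.isOpen_iff]
  rintro x ⟨hx, hlt⟩
  set η := (ε - (v x - u x)) / 2 with hη
  obtain ⟨δ₁, h1, H1⟩ := ilow_lsc hI hx (a := u x - η) (by linarith)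
  obtain ⟨δ₂, h2, H2⟩ := shigh_usc hS hx (a := v x + η) (by linarith)
  obtain ⟨δ₃, h3, H3⟩ := Metric.isOpen_iff.1 hOm x hx
  refine ⟨min δ₁ (min δ₂ δ₃), by positivity, fun y hy => ?_⟩
  rw [Metric.mem_ball, dist_eq_norm, lt_min_iff, lt_min_iff] at hy
  have hyO : y ∈ Om := H3 (by rw [Metric.mem_ball, dist_eq_norm]; exact hy.2.2)
  have a1 := H1 y hyO hy.1
  have a2 := H2 y hyO hy.2.1
  exact ⟨hyO, by linarith⟩

lemma hcont_W_dense {n : ℕ} {Om : Set (Pt n)} {u v : Pt n → ℝ}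
    (h : HContPair Om u v) {ε : ℝ} (hε : 0 < ε) :
    Om ⊆ closure {x | x ∈ Om ∧ v x - u x < ε} := by
  obtain ⟨huv, hI, hS, hSu⟩ := hcont_facts h
  intro x hx
  rw [Metric.mem_closure_iff]
  intro r hr
  obtain ⟨δ₂, h2, H2⟩ := shigh_usc hS hx (a := v x + ε / 2) (by linarith)
  obtain ⟨y, hy, hyx, hlt⟩ := shigh_approx huv hS hSu hx (a := v x - ε / 2) (δ := min r δ₂)
    (by linarith) (by positivity)
  rw [lt_min_iff] at hyx
  have := H2 y hy hyx.2
  exact ⟨y, ⟨hy, by linarith⟩, by rw [dist_comm, dist_eq_norm]; exact hyx.1⟩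

theorem stmt3 {n : ℕ} (Om : Set (Pt n)) (hOm : IsOpen Om)
    (F : Set ((Pt n → ℝ) × (Pt n → ℝ))) (hcount : F.Countable)
    (hH : ∀ p ∈ F, HContPair Om p.1 p.2) :
    Om ⊆ closure {x | x ∈ Om ∧ ∀ p ∈ F, p.1 x = p.2 x} ∧
    ∀ p ∈ F, ContinuousOn p.1 {x | x ∈ Om ∧ ∀ q ∈ F, q.1 x = q.2 x} := by
  constructor
  · have hdense : Dense (⋂ p ∈ F, ⋂ k : ℕ,
        ({x | x ∈ Om ∧ p.2 x - p.1 x < 1 / ((k : ℝ) + 1)} ∪ (closure Om)ᶜ)) := by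
      have hop : ∀ p ∈ F, ∀ k : ℕ,
          IsOpen ({x | x ∈ Om ∧ p.2 x - p.1 x < 1 / ((k : ℝ) + 1)} ∪ (closure Om)ᶜ) :=
        fun p hp k => (hcont_W_open hOm (hH p hp) _).union isClosed_closure.isOpen_compl
      have hde : ∀ p ∈ F, ∀ k : ℕ,
          Dense ({x | x ∈ Om ∧ p.2 x - p.1 x < 1 / ((k : ℝ) + 1)} ∪ (closure Om)ᶜ) := by
        intro p hp k x
        by_cases hx : x ∈ closure Om
        · have := closure_minimal (hcont_W_dense (hH p hp)
            (ε := 1 / ((k : ℝ) + 1)) (by positivity)) isClosed_closure hx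
          exact closure_mono subset_union_left this
        · exact subset_closure (Or.inr hx)
      refine dense_biInter_of_Gδ (fun p hp => ?_) hcount (fun p hp => ?_)
      · exact IsGδ.iInter_of_isOpen (hop p hp)
      · exact dense_iInter_of_isOpen (hop p hp) (hde p hp)
    intro x hx
    rw [mem_closure_iff]
    intro U hU hxU
    obtain ⟨y, ⟨hyU, hyO⟩, hy⟩ := hdense.inter_open_nonempty (U ∩ Om) (hU.inter hOm) ⟨x, hxU, hx⟩
    refine ⟨y, hyU, hyO, fun p hp => ?_⟩
    refine le_antisymm ((hcont_facts (hH p hp)).1 y hyO) ?_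
    simp only [mem_iInter] at hy
    by_contra hc
    push Not at hc
    obtain ⟨k, hk⟩ := exists_nat_one_div_lt (sub_pos.2 hc)
    rcases hy p hp k with h | h
    · exact lt_asymm hk h.2
    · exact h (subset_closure hyO)
  · intro p hp x hx
    obtain ⟨huv, hI, hS, hSu⟩ := hcont_facts (hH p hp)
    rw [Metric.continuousWithinAt_iff]
    intro ε hε
    obtain ⟨δ₁, h1, H1⟩ := ilow_lsc hI hx.1 (a := p.1 x - ε) (by linarith)
    obtain ⟨δ₂, h2, H2⟩ := shigh_usc hS hx.1 (a := p.2 x + ε) (by linarith)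
    refine ⟨min δ₁ δ₂, by positivity, fun y hy hyx => ?_⟩
    rw [dist_eq_norm, lt_min_iff] at hyx
    have a1 := H1 y hy.1 hyx.1
    have a2 := H2 y hy.1 hyx.2
    have a3 := hx.2 p hp
    have a4 := huv y hy.1
    rw [Real.dist_eq, abs_lt]
    constructor <;> linarith
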